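/- Let μ be a finite (Borel) measure on ℝ³ that is invariant under every rotation R_α about the x₃-axis (i.e., the pushforward of μ under R_α equals μ for every angle α), and let g : ℝ³ → ℝ be a bounded measurable function that is axisymmetric, i.e., g(R_α x) = g(x) for all α and x. Define e_r : ℝ³ → ℝ³ by e_r(x) = (x₁/√(x₁²+x₂²), x₂/√(x₁²+x₂²), 0) for x₁² + x₂² > 0 and e_r(x) = 0 when x₁² + x₂² = 0. Then the ℝ³-valued integral ∫_{ℝ³} g(x) e_r(x) dμ(x) equals the zero vector. -/

import Mathlib

open MeasureTheory

noncomputable section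

/-- Rotation of `ℝ³` about the `x₃`-axis by angle `α`. -/
def rotZ (α : ℝ) (x : EuclideanSpace ℝ (Fin 3)) : EuclideanSpace ℝ (Fin 3) :=
  (WithLp.equiv 2 (Fin 3 → ℝ)).symm
    ![x 0 * Real.cos α - x 1 * Real.sin α, x 0 * Real.sin α + x 1 * Real.cos α, x 2]

/-- Radial unit vector field of cylindrical coordinates, extended by `0` on the axis. -/
def erAx (x : EuclideanSpace ℝ (Fin 3)) : EuclideanSpace ℝ (Fin 3) :=
  if x 0 ^ 2 + x 1 ^ 2 = 0 then 0 else
    (WithLp.equiv 2 (Fin 3 → ℝ)).symm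
      ![x 0 / Real.sqrt (x 0 ^ 2 + x 1 ^ 2), x 1 / Real.sqrt (x 0 ^ 2 + x 1 ^ 2), 0]

/-- If `μ` is a finite measure on `ℝ³` invariant under all rotations about the `x₃`-axis and
`g` is a bounded measurable axisymmetric function, then `∫ g e_r dμ = 0`: concentration on
the axis is annihilated by multiplication with `e_r`. -/
theorem stmt_14 (μ : Measure (EuclideanSpace ℝ (Fin 3))) [IsFiniteMeasure μ]
    (hinv : ∀ α : ℝ, μ.map (rotZ α) = μ)
    (g : EuclideanSpace ℝ (Fin 3) → ℝ) (hg : Measurable g)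
    (hb : ∃ C : ℝ, ∀ x, |g x| ≤ C)
    (hax : ∀ (α : ℝ) (x : EuclideanSpace ℝ (Fin 3)), g (rotZ α x) = g x) :
    (∫ x, g x • erAx x ∂μ) = 0 := by
  have hc : Continuous (rotZ Real.pi) := by
    unfold rotZ
    refine (PiLp.continuous_toLp 2 _).comp (continuous_pi fun i => ?_)
    fin_cases i <;> simp <;> fun_prop
  have hinj : Function.Injective (rotZ Real.pi) := by
    intro x y h
    have h0 := congrArg (fun v => v 0) h
    have h1 := congrArg (fun v => v 1) h
    have h2 := congrArg (fun v => v 2) h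
    simp [rotZ] at h0 h1 h2
    ext i
    fin_cases i <;> simp [h0, h1, h2]
  have hemb : MeasurableEmbedding (rotZ Real.pi) := hc.measurableEmbedding hinj
  have hmp : MeasurePreserving (rotZ Real.pi) μ μ := ⟨hc.measurable, hinv _⟩
  have her : ∀ x, erAx (rotZ Real.pi x) = - erAx x := by
    intro x
    have h0 : rotZ Real.pi x 0 = - x 0 := by simp [rotZ]
    have h1 : rotZ Real.pi x 1 = - x 1 := by simp [rotZ]
    unfold erAx
    rw [h0, h1, neg_sq, neg_sq]
    split_ifs
    · simp
    · ext i
      fin_cases i <;> simp [neg_div]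
  have key := hmp.integral_comp hemb (fun x => g x • erAx x)
  simp only [hax, her, smul_neg, integral_neg] at key
  have : IsAddTorsionFree (EuclideanSpace ℝ (Fin 3)) := .of_isTorsionFree ℝ _
  exact self_eq_neg.mp key.symm

end
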